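/- Gaussian-smoothed second-order stable density correction, first-moment version (limit of B₂₂^{(3)} in the proof of Theorem 3.3): for every s > 0 the integral J(s) := ∫₀^∞ E[σ·W·1_{0 ≤ σ·W ≤ s·z}]·(p(z) − C·z^{−Y−1}) dz converges absolutely, and lim_{s→0⁺} s^{−2Y}·J(s) = −((2Y−1)·C²·cos²(πY/2)·Γ(−Y)² / (√(2π)·σ^{2Y−1}))·m. -/

import Mathlib

open MeasureTheory ProbabilityTheory Filter Topology Asymptotics Set

/-
A Gaussian integration by parts gives `E[σW; 0 ≤ σW ≤ sz] = σ / √(2π) * (1 - exp (-(tz)² / 2))` with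
`t = s / σ`. Writing `exp (-(tz)² / 2)` as the characteristic function of `tW` and exchanging the
integrals turns the density part of `J(s)` into `E[1 - exp (-c|tW|^Y)] / 2`. The value `-Γ(-α)` of
`∫ (1 - exp (-x)) x^(-α-1) dx` turns the Lévy part into `E[c|tW|^Y] / 2`, so first-order terms
cancel and the quadratic term of `exp` yields `-c² t^(2Y) E|W|^(2Y) / 4`; finally
`E|W|^(2Y) = (2Y - 1) E|W|^(2Y-2)`.

The law `μ` only determines the positive part of `p`; that `p` is nevertheless nonnegative comes
from the analyticity of stable densities of index at least `1`.
-/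

section Gaussian

open Real
open scoped NNReal

lemma integral_abs_rpow_gaussianReal {v : ℝ≥0} (hv : v ≠ 0) {r : ℝ} (hr : -1 < r) :
    ∫ x, |x| ^ r ∂gaussianReal 0 v = (2 * v) ^ (r / 2) * Gamma ((r + 1) / 2) / √π := by
  have hdensity (x : ℝ) : gaussianPDFReal 0 v x • |x| ^ r =
      (fun y : ℝ ↦ (√(2 * π * v))⁻¹ * (y ^ r * exp (-(2 * (v : ℝ))⁻¹ * y ^ (2 : ℝ)))) |x| := by
    simp only [gaussianPDFReal_def, smul_eq_mul, rpow_two, sq_abs, sub_zero]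
    rw [show -x ^ 2 / (2 * v : ℝ) = -(2 * (v : ℝ))⁻¹ * x ^ 2 by field_simp]
    ring
  have hpow : (2 * (v : ℝ))⁻¹ ^ (-(r + 1) / 2) = (2 * (v : ℝ)) ^ (r / 2) * √(2 * v) := by
    rw [inv_rpow (by positivity), ← rpow_neg (by positivity), sqrt_eq_rpow,
      ← rpow_add (by positivity)]
    congr 1
    ring
  rw [integral_gaussianReal_eq_integral_smul hv, integral_congr_ae (.of_forall hdensity),
    integral_comp_abs (f := fun y : ℝ ↦ _ * (y ^ r * exp (_ * y ^ (2 : ℝ)))), integral_const_mul,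
    integral_rpow_mul_exp_neg_mul_rpow two_pos hr (by positivity), hpow,
    show 2 * π * v = 2 * v * π by ring, sqrt_mul (by positivity)]
  field_simp

lemma integral_abs_rpow_add_two_gaussianReal {v : ℝ≥0} (hv : v ≠ 0) {r : ℝ} (hr : -1 < r) :
    ∫ x, |x| ^ (r + 2) ∂gaussianReal 0 v = (r + 1) * v * ∫ x, |x| ^ r ∂gaussianReal 0 v := by
  rw [integral_abs_rpow_gaussianReal hv hr, integral_abs_rpow_gaussianReal hv (by linarith),
    show (r + 2 + 1) / 2 = (r + 1) / 2 + 1 by ring, Gamma_add_one (by linarith),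
    show (r + 2) / 2 = r / 2 + 1 by ring, rpow_add_one (by positivity)]
  ring

lemma integrable_abs_rpow_gaussianReal (v : ℝ≥0) {r : ℝ} (hr : 0 ≤ r) :
    Integrable (fun x ↦ |x| ^ r) (gaussianReal 0 v) := by
  simpa [hr] using (memLp_id_gaussianReal (μ := 0) (v := v) r.toNNReal).integrable_norm_rpow'

lemma hasDerivAt_gaussianPDFReal (m : ℝ) (v : ℝ≥0) (x : ℝ) :
    HasDerivAt (gaussianPDFReal m v) (-((x - m) / v * gaussianPDFReal m v x)) x := by
  have h := ((((hasDerivAt_id x).sub_const m).pow 2).neg.div_const (2 * v : ℝ)).exp.const_mul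
    (√(2 * π * v))⁻¹
  convert! h using 1
  simp only [gaussianPDFReal_def, id_eq, Pi.neg_apply, Pi.pow_apply, Nat.cast_ofNat]
  ring

lemma setIntegral_Icc_sub_gaussianReal (m : ℝ) {v : ℝ≥0} (hv : v ≠ 0) {a b : ℝ} (hab : a ≤ b) :
    ∫ x in Icc a b, (x - m) ∂gaussianReal m v =
      v * (gaussianPDFReal m v a - gaussianPDFReal m v b) := by
  have hcont : Continuous (gaussianPDFReal m v) :=
    continuous_iff_continuousAt.2 fun x ↦ (hasDerivAt_gaussianPDFReal m v x).continuousAt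
  have hderiv (x : ℝ) :
      HasDerivAt (fun y ↦ -(v * gaussianPDFReal m v y)) (gaussianPDFReal m v x * (x - m)) x := by
    convert! ((hasDerivAt_gaussianPDFReal m v x).const_mul (v : ℝ)).neg using 1
    field_simp
  calc ∫ x in Icc a b, (x - m) ∂gaussianReal m v
      = ∫ x in Icc a b, gaussianPDFReal m v x * (x - m) := by
        rw [gaussianReal_of_var_ne_zero m hv, setIntegral_withDensity_eq_setIntegral_toReal_smul
          (measurable_gaussianPDF m v) (.of_forall fun _ ↦ gaussianPDF_lt_top) _ measurableSet_Icc]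
        simp only [toReal_gaussianPDF, smul_eq_mul]
    _ = ∫ x in a..b, gaussianPDFReal m v x * (x - m) := by
        rw [integral_Icc_eq_integral_Ioc, intervalIntegral.integral_of_le hab]
    _ = v * (gaussianPDFReal m v a - gaussianPDFReal m v b) := by
        rw [intervalIntegral.integral_eq_sub_of_hasDerivAt (fun x _ ↦ hderiv x)
          (Continuous.intervalIntegrable (by fun_prop) _ _)]
        ring

lemma integral_indicator_mul_gaussianReal_zero_one {σ b : ℝ} (hσ : 0 < σ) (hb : 0 ≤ b) :
    ∫ x, {x | 0 ≤ σ * x ∧ σ * x ≤ b}.indicator (fun x ↦ σ * x) x ∂gaussianReal 0 1 =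
      σ / √(2 * π) * (1 - exp (-((b / σ) ^ 2 / 2))) := by
  have hset : {x | 0 ≤ σ * x ∧ σ * x ≤ b} = Icc 0 (b / σ) := by
    ext x
    simp only [mem_ofPred_eq, mem_Icc, mul_nonneg_iff_of_pos_left hσ, le_div_iff₀' hσ]
  have htrunc := setIntegral_Icc_sub_gaussianReal 0 one_ne_zero (div_nonneg hb hσ.le)
  simp only [sub_zero] at htrunc
  rw [hset, integral_indicator measurableSet_Icc, integral_const_mul, htrunc]
  simp only [gaussianPDFReal_def, NNReal.coe_one, mul_one, sub_zero, neg_div, one_mul,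
    zero_pow two_ne_zero, zero_div, neg_zero, exp_zero]
  ring

end Gaussian

section LevyIntegral

open Real

lemma sqrt_pi_mul_Gamma_neg_half {Y : ℝ} (hY : cos (π * Y / 2) ≠ 0) :
    √π * Gamma (-(Y / 2)) =
      2 * 2 ^ Y * Gamma (-Y) * cos (π * Y / 2) * Gamma ((Y + 1) / 2) := by
  have hdup := Gamma_mul_Gamma_add_half (-(Y / 2))
  have hrefl := Gamma_mul_Gamma_one_sub ((Y + 1) / 2)
  rw [show π * ((Y + 1) / 2) = π * Y / 2 + π / 2 by ring, sin_add_pi_div_two,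
    eq_div_iff hY] at hrefl
  rw [show 2 * -(Y / 2) = -Y by ring, show 1 - -Y = Y + 1 by ring, rpow_add_one two_ne_zero,
    show -(Y / 2) + 1 / 2 = 1 - (Y + 1) / 2 by ring] at hdup
  refine mul_left_cancel₀ (sqrt_ne_zero'.2 pi_pos) ?_
  rw [← mul_assoc, mul_self_sqrt pi_pos.le]
  linear_combination (Gamma ((Y + 1) / 2) * cos (π * Y / 2)) * hdup - Gamma (-(Y / 2)) * hrefl

lemma integrableOn_one_sub_exp_neg_mul_rpow {α : ℝ} (h0 : 0 < α) (h1 : α < 1) :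
    IntegrableOn (fun x : ℝ ↦ (1 - exp (-x)) * x ^ (-α - 1)) (Ioi 0) := by
  have hmeas {s : Set ℝ} : AEStronglyMeasurable (fun x : ℝ ↦ (1 - exp (-x)) * x ^ (-α - 1))
      (volume.restrict s) := by fun_prop
  rw [← Ioc_union_Ioi_eq_Ioi (zero_le_one' ℝ)]
  refine IntegrableOn.union ?_ ?_
  · have hdom : IntegrableOn (fun x : ℝ ↦ x ^ (-α)) (Ioc 0 1) :=
      (intervalIntegrable_iff_integrableOn_Ioc_of_le zero_le_one).1
        (intervalIntegral.intervalIntegrable_rpow' (by linarith))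
    refine hdom.mono' hmeas ((ae_restrict_iff' measurableSet_Ioc).2 (.of_forall ?_))
    rintro x ⟨hx, -⟩
    have hexp : 0 ≤ 1 - exp (-x) := by simp [hx.le]
    rw [norm_of_nonneg (by positivity), show -α = -α - 1 + 1 by ring, rpow_add_one hx.ne',
      mul_comm (_ ^ _), add_sub_cancel_right]
    gcongr
    linarith [one_sub_le_exp_neg x]
  · have hdom : IntegrableOn (fun x : ℝ ↦ x ^ (-α - 1)) (Ioi 1) :=
      integrableOn_Ioi_rpow_of_lt (by linarith) one_pos
    refine hdom.mono' hmeas ((ae_restrict_iff' measurableSet_Ioi).2 (.of_forall ?_))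
    intro x (hx : 1 < x)
    have hexp : 0 ≤ 1 - exp (-x) := by simp [zero_le_one.trans hx.le]
    rw [norm_of_nonneg (by positivity)]
    exact mul_le_of_le_one_left (by positivity) (by linarith [exp_pos (-x)])

lemma tendsto_one_sub_exp_neg_mul_rpow_nhdsGT_zero {α : ℝ} (h1 : α < 1) :
    Tendsto (fun x : ℝ ↦ (1 - exp (-x)) * x ^ (-α)) (𝓝[>] 0) (𝓝 0) := by
  have hpow : Tendsto (fun x : ℝ ↦ x ^ (1 - α)) (𝓝[>] 0) (𝓝 0) := by
    have := continuousAt_rpow_const 0 (1 - α) (.inr (by linarith))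
    simpa [zero_rpow (sub_ne_zero.2 h1.ne')] using this.tendsto.mono_left nhdsWithin_le_nhds
  refine squeeze_zero_norm' ?_ hpow
  filter_upwards [self_mem_nhdsWithin] with x (hx : 0 < x)
  have hexp : 0 ≤ 1 - exp (-x) := by simp [hx.le]
  rw [norm_of_nonneg (by positivity), show 1 - α = 1 + -α by ring, rpow_add hx, rpow_one]
  gcongr
  linarith [one_sub_le_exp_neg x]

lemma tendsto_one_sub_exp_neg_mul_rpow_atTop {α : ℝ} (h0 : 0 < α) :
    Tendsto (fun x : ℝ ↦ (1 - exp (-x)) * x ^ (-α)) atTop (𝓝 0) := by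
  have hexp : Tendsto (fun x : ℝ ↦ 1 - exp (-x)) atTop (𝓝 (1 - 0)) :=
    tendsto_const_nhds.sub tendsto_exp_neg_atTop_nhds_zero
  simpa using hexp.mul (tendsto_rpow_neg_atTop h0)

/- Cauchy–Saalschütz: subtracting the Taylor polynomial of `exp (-x)` continues Euler's integral
across its first pole. -/
lemma integral_one_sub_exp_neg_mul_rpow {α : ℝ} (h0 : 0 < α) (h1 : α < 1) :
    ∫ x in Ioi (0 : ℝ), (1 - exp (-x)) * x ^ (-α - 1) = -Gamma (-α) := by
  have hα : α ≠ 0 := h0.ne'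
  have hGamma : IntegrableOn (fun x : ℝ ↦ exp (-x) * x ^ (-α)) (Ioi 0) := by
    simpa using GammaIntegral_convergent (s := 1 - α) (by linarith)
  have hparts := integral_Ioi_mul_deriv_eq_deriv_mul (a := 0) (a' := 0) (b' := 0)
    (u := fun x ↦ 1 - exp (-x)) (v := fun x ↦ -α⁻¹ * x ^ (-α))
    (u' := fun x ↦ exp (-x)) (v' := fun x ↦ x ^ (-α - 1))
    (fun x _ ↦ by simpa using (hasDerivAt_neg x).exp.const_sub 1)
    (fun x hx ↦ by
      convert! (hasDerivAt_rpow_const (p := -α) (.inl (mem_Ioi.1 hx).ne')).const_mul (-α⁻¹) using 1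
      field_simp)
    (integrableOn_one_sub_exp_neg_mul_rpow h0 h1)
    (IntegrableOn.congr_fun (hGamma.const_mul (-α⁻¹)) (fun x _ ↦ by simp only [Pi.mul_apply]; ring)
      measurableSet_Ioi)
    (by
      convert! (tendsto_one_sub_exp_neg_mul_rpow_nhdsGT_zero h1).const_mul (-α⁻¹) using 2
      · simp only [Pi.mul_apply]; ring
      · simp)
    (by
      convert! (tendsto_one_sub_exp_neg_mul_rpow_atTop h0).const_mul (-α⁻¹) using 2
      · simp only [Pi.mul_apply]; ring
      · simp)
  have hEuler : ∫ x in Ioi (0 : ℝ), exp (-x) * (-α⁻¹ * x ^ (-α)) = -α⁻¹ * Gamma (1 - α) := by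
    rw [Gamma_eq_integral (by linarith), ← integral_const_mul]
    congr! 2
    rw [show 1 - α - 1 = -α by ring]
    ring
  rw [hparts, hEuler, show 1 - α = -α + 1 by ring, Gamma_add_one (by simpa using hα)]
  field_simp
  ring

variable {Y a : ℝ}

lemma one_sub_exp_neg_mul_sq_mul_rpow_eq (ha : 0 < a) {z : ℝ} (hz : 0 < z) :
    (1 - exp (-(a * z ^ 2))) * z ^ (-Y - 1) = 2⁻¹ * a ^ (Y / 2 + 1) *
      (2 * z ^ (2 - 1 : ℝ) *
        ((1 - exp (-(a * z ^ (2 : ℝ)))) * (a * z ^ (2 : ℝ)) ^ (-(Y / 2) - 1))) := by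
  have hpow : z ^ (2 - 1 : ℝ) * (a * z ^ (2 : ℝ)) ^ (-(Y / 2) - 1) =
      (a ^ (Y / 2 + 1))⁻¹ * z ^ (-Y - 1) := by
    rw [mul_rpow ha.le (by positivity), ← rpow_mul hz.le, ← rpow_neg ha.le, mul_left_comm,
      ← rpow_add hz]
    ring_nf
  rw [← rpow_two]
  linear_combination (norm := skip) (-(a ^ (Y / 2 + 1) * (1 - exp (-(a * z ^ (2 : ℝ)))))) * hpow
  field_simp
  ring

lemma integrableOn_one_sub_exp_neg_mul_sq_mul_rpow (h0 : 0 < Y) (h2 : Y < 2) (ha : 0 < a) :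
    IntegrableOn (fun z : ℝ ↦ (1 - exp (-(a * z ^ 2))) * z ^ (-Y - 1)) (Ioi 0) := by
  have hscale := (integrableOn_Ioi_comp_mul_left_iff _ 0 ha).2 (by
    simpa using integrableOn_one_sub_exp_neg_mul_rpow (α := Y / 2) (by linarith) (by linarith))
  have hsq := (integrableOn_Ioi_comp_rpow_iff _ two_ne_zero).2 hscale
  refine IntegrableOn.congr_fun (hsq.const_mul (2⁻¹ * a ^ (Y / 2 + 1))) (fun z hz ↦ ?_)
    measurableSet_Ioi
  simp only [abs_two, smul_eq_mul]
  exact (one_sub_exp_neg_mul_sq_mul_rpow_eq ha hz).symm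

lemma integral_one_sub_exp_neg_mul_sq_mul_rpow (h0 : 0 < Y) (h2 : Y < 2) (ha : 0 < a) :
    ∫ z in Ioi (0 : ℝ), (1 - exp (-(a * z ^ 2))) * z ^ (-Y - 1) =
      -(a ^ (Y / 2) * Gamma (-(Y / 2)) / 2) := by
  have hsq := integral_comp_rpow_Ioi_of_pos
    (g := fun x ↦ (1 - exp (-(a * x))) * (a * x) ^ (-(Y / 2) - 1)) two_pos
  have hscale := integral_comp_mul_left_Ioi
    (fun x ↦ (1 - exp (-x)) * x ^ (-(Y / 2) - 1)) 0 ha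
  simp only [smul_eq_mul, mul_zero] at hsq hscale
  rw [setIntegral_congr_fun measurableSet_Ioi fun z hz ↦ one_sub_exp_neg_mul_sq_mul_rpow_eq ha hz,
    integral_const_mul, hsq, hscale,
    integral_one_sub_exp_neg_mul_rpow (by linarith) (by linarith), rpow_add_one ha.ne']
  field_simp

end LevyIntegral

section CharFun

open scoped FourierTransform RealInnerProductSpace

lemma integral_charFun_comm {E : Type*} [NormedAddCommGroup E] [InnerProductSpace ℝ E]
    [MeasurableSpace E] [BorelSpace E] [SecondCountableTopology E] (μ ν : Measure E)
    [IsFiniteMeasure μ] [IsFiniteMeasure ν] :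
    ∫ x, charFun μ x ∂ν = ∫ y, charFun ν y ∂μ := by
  have hint : Integrable (Function.uncurry fun x y : E ↦ Complex.exp (⟪y, x⟫ * Complex.I))
      (ν.prod μ) :=
    .of_bound (by fun_prop) 1 (.of_forall fun z ↦ (Complex.norm_exp_ofReal_mul_I _).le)
  simpa only [charFun_apply, real_inner_comm] using integral_integral_swap hint

lemma integral_exp_neg_mul_sq_eq_integral_charFun (μ : Measure ℝ) [IsFiniteMeasure μ] (t : ℝ) :
    ((∫ x, Real.exp (-((t * x) ^ 2 / 2)) ∂μ : ℝ) : ℂ) =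
      ∫ w, charFun μ (t * w) ∂gaussianReal 0 1 := by
  calc ((∫ x, Real.exp (-((t * x) ^ 2 / 2)) ∂μ : ℝ) : ℂ)
      = ∫ x, charFun (gaussianReal 0 1) (t * x) ∂μ := by
        rw [← integral_complex_ofReal]
        congr! 2 with x
        simp [charFun_gaussianReal]
    _ = ∫ y, charFun (gaussianReal 0 1) y ∂μ.map (t * ·) :=
        (integral_map (by fun_prop) measurable_charFun.aestronglyMeasurable).symm
    _ = ∫ w, charFun μ (t * w) ∂gaussianReal 0 1 := by
        simp only [← integral_charFun_comm (μ.map (t * ·)), charFun_map_mul]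

lemma isNegInvariant_of_charFun_neg {E : Type*} [NormedAddCommGroup E] [InnerProductSpace ℝ E]
    [CompleteSpace E] [MeasurableSpace E] [BorelSpace E] [SecondCountableTopology E]
    {μ : Measure E} [IsFiniteMeasure μ] (h : ∀ u, charFun μ (-u) = charFun μ u) :
    μ.IsNegInvariant where
  neg_eq_self := by
    have : IsFiniteMeasure μ.neg := by rw [Measure.neg]; infer_instance
    refine Measure.ext_of_charFun (funext fun u ↦ ?_)
    simpa [Measure.neg, Function.comp_def, h] using charFun_map_smul (μ := μ) (-1) u

lemma setIntegral_Ioi_zero_of_even {μ : Measure ℝ} [μ.IsNegInvariant] {f : ℝ → ℝ}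
    (hf : Integrable f μ) (heven : f.Even) (h0 : f 0 = 0) :
    ∫ x in Ioi 0, f x ∂μ = (∫ x, f x ∂μ) / 2 := by
  have hneg : ∫ x in Iio 0, f x ∂μ = ∫ x in Ioi 0, f x ∂μ := by
    have := (Measure.measurePreserving_neg μ).setIntegral_preimage_emb
      (MeasurableEquiv.neg ℝ).measurableEmbedding f (Ioi 0)
    simpa [heven _] using this
  have hIic : ∫ x in Iic 0, f x ∂μ = ∫ x in Iio 0, f x ∂μ := by
    rw [← Iio_union_right, setIntegral_union (by simp) (measurableSet_singleton 0)
      hf.integrableOn hf.integrableOn]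
    simp [h0]
  have hsplit := integral_add_compl (measurableSet_Ioi (a := (0 : ℝ))) hf
  rw [compl_Ioi, hIic, hneg] at hsplit
  linarith

lemma integrable_exp_neg_mul_abs {b : ℝ} (hb : 0 < b) :
    Integrable fun x : ℝ ↦ Real.exp (-(b * |x|)) := by
  refine (integrable_fun_norm_addHaar volume (f := fun r ↦ Real.exp (-(b * r)))).2 ?_
  simpa using exp_neg_integrableOn_Ioi 0 hb

lemma zero_mem_interior_integrableExpSet_withDensity {k : ℝ → ℝ} (hk : Measurable k) {K b : ℝ}
    (hb : 0 < b) (hbound : ∀ x, |k x| ≤ K * Real.exp (-(b * |x|))) :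
    0 ∈ interior (integrableExpSet id (volume.withDensity fun x ↦ ENNReal.ofReal (k x))) := by
  refine mem_interior.2 ⟨Ioo (-b) b, fun t ht ↦ ?_, isOpen_Ioo, by simp [hb]⟩
  refine (integrable_withDensity_iff_integrable_smul' (by fun_prop)
    (.of_forall fun _ ↦ ENNReal.ofReal_lt_top)).2 ?_
  refine ((integrable_exp_neg_mul_abs (sub_pos.2 (abs_lt.2 ht))).const_mul K).mono'
    (by fun_prop) (.of_forall fun x ↦ ?_)
  have hmax : |max (k x) 0| ≤ |k x| := abs_max_le_max_abs_abs.trans (by simp)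
  calc ‖(ENNReal.ofReal (k x)).toReal • Real.exp (t * id x)‖
      ≤ |k x| * Real.exp (|t| * |x|) := by
        rw [norm_smul, ENNReal.toReal_ofReal', Real.norm_eq_abs, Real.norm_eq_abs, Real.abs_exp,
          ← abs_mul]
        exact mul_le_mul hmax (Real.exp_le_exp.2 (le_abs_self _)) (Real.exp_pos _).le (abs_nonneg _)
    _ ≤ K * Real.exp (-(b * |x|)) * Real.exp (|t| * |x|) := by gcongr; exact hbound x
    _ = K * Real.exp (-((b - |t|) * |x|)) := by
        rw [mul_assoc, ← Real.exp_add]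
        ring_nf

lemma analyticOnNhd_charFun {μ : Measure ℝ} (h : 0 ∈ interior (integrableExpSet id μ)) :
    AnalyticOnNhd ℝ (charFun μ) univ := by
  intro t _
  have hline : AnalyticAt ℝ (fun s : ℝ ↦ (s : ℂ) * Complex.I) t :=
    (Complex.ofRealCLM.analyticAt t).mul analyticAt_const
  have hmgf : AnalyticAt ℝ (complexMGF id μ) (t * Complex.I) :=
    (analyticAt_complexMGF (by simpa using h)).restrictScalars
  exact (hmgf.fun_comp_of_eq hline rfl).congr (.of_forall complexMGF_id_mul_I)

lemma charFun_withDensity_ofReal {k : ℝ → ℝ} (hk : Measurable k) (u : ℝ) :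
    charFun (volume.withDensity fun x ↦ ENNReal.ofReal (k x)) u =
      ∫ x : ℝ, Complex.exp (u * x * Complex.I) * (max (k x) 0 : ℝ) := by
  rw [charFun_apply_real, integral_withDensity_eq_integral_toReal_smul (by fun_prop)
    (.of_forall fun _ ↦ ENNReal.ofReal_lt_top)]
  simp only [ENNReal.toReal_ofReal', Complex.real_smul, mul_comm]

lemma fourier_max_zero_eq_charFun_withDensity {k : ℝ → ℝ} (hk : Measurable k) (w : ℝ) :
    𝓕 (fun x ↦ ((max (k x) 0 : ℝ) : ℂ)) w =
      charFun (volume.withDensity fun x ↦ ENNReal.ofReal (k x)) (-(2 * Real.pi * w)) := by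
  rw [Real.fourier_real_eq_integral_exp_smul, charFun_withDensity_ofReal hk]
  congr! 3 with x
  push_cast
  ring_nf

lemma max_zero_eq_charFun_of_charFun_withDensity {p g : ℝ → ℝ} (hp : Continuous p)
    [IsFiniteMeasure (volume.withDensity fun x ↦ ENNReal.ofReal (p x))]
    (hchar : ∀ u, charFun (volume.withDensity fun x ↦ ENNReal.ofReal (p x)) u = g u)
    (hgm : Measurable g) (hg0 : ∀ u, 0 ≤ g u) (hg : Integrable g) (x : ℝ) :
    ((max (p x) 0 : ℝ) : ℂ) = charFun
      (volume.withDensity fun w ↦ ENNReal.ofReal (g (-(2 * Real.pi * w)))) (2 * Real.pi * x) := by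
  have hfourier : 𝓕 (fun x ↦ ((max (p x) 0 : ℝ) : ℂ)) =
      fun w ↦ ((max (g (-(2 * Real.pi * w))) 0 : ℝ) : ℂ) := funext fun w ↦ by
    rw [fourier_max_zero_eq_charFun_withDensity hp.measurable, hchar, max_eq_left (hg0 _)]
  have hpint : Integrable fun x ↦ ((max (p x) 0 : ℝ) : ℂ) := by
    have := (integrable_withDensity_iff_integrable_smul' (by fun_prop)
      (.of_forall fun _ ↦ ENNReal.ofReal_lt_top)).1 (integrable_const
        (μ := volume.withDensity fun x ↦ ENNReal.ofReal (p x)) (1 : ℂ))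
    simpa [ENNReal.toReal_ofReal'] using this
  have hgint : Integrable fun w ↦ ((max (g (-(2 * Real.pi * w))) 0 : ℝ) : ℂ) := by
    have := hg.comp_mul_left' (R := -(2 * Real.pi)) (by simp [Real.pi_ne_zero])
    simpa [hg0] using this.ofReal (𝕜 := ℂ)
  have hinv := Continuous.fourierInv_fourier_eq (f := fun x ↦ ((max (p x) 0 : ℝ) : ℂ))
    (by fun_prop) hpint (hfourier ▸ hgint)
  calc ((max (p x) 0 : ℝ) : ℂ)
      = 𝓕⁻ (𝓕 fun x ↦ ((max (p x) 0 : ℝ) : ℂ)) x := (congrFun hinv x).symm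
    _ = 𝓕 (fun w ↦ ((max (g (-(2 * Real.pi * w))) 0 : ℝ) : ℂ)) (-x) := by
        rw [Real.fourierInv_eq_fourier_neg, hfourier]
    _ = _ := by
        rw [fourier_max_zero_eq_charFun_withDensity (by fun_prop), mul_neg, neg_neg]

/- By inversion the positive part of `p` is the characteristic function of a measure with
exponential moments, hence real-analytic, so it cannot vanish on an interval. -/
lemma nonneg_of_charFun_withDensity_le_exp {p g : ℝ → ℝ} (hp : Continuous p)
    [IsProbabilityMeasure (volume.withDensity fun x ↦ ENNReal.ofReal (p x))]
    (hchar : ∀ u, charFun (volume.withDensity fun x ↦ ENNReal.ofReal (p x)) u = g u)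
    (hgm : Measurable g) (hg0 : ∀ u, 0 ≤ g u) {K b : ℝ} (hb : 0 < b)
    (hg : ∀ u, g u ≤ K * Real.exp (-(b * |u|))) : ∀ x, 0 ≤ p x := by
  by_contra! hneg
  obtain ⟨x₀, hx₀⟩ := hneg
  have habs (u : ℝ) : |g u| ≤ K * Real.exp (-(b * |u|)) := (abs_of_nonneg (hg0 u)).trans_le (hg u)
  have hgint : Integrable g :=
    ((integrable_exp_neg_mul_abs hb).const_mul K).mono' (by fun_prop) (.of_forall habs)
  have hmoments := zero_mem_interior_integrableExpSet_withDensity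
    (k := fun w ↦ g (-(2 * Real.pi * w))) (by fun_prop) (K := K) (b := b * (2 * Real.pi))
    (by positivity)
    fun w ↦ (habs _).trans_eq (by simp [abs_mul, abs_of_pos Real.pi_pos, mul_assoc])
  have hanalytic : AnalyticOnNhd ℝ (fun x ↦ ((max (p x) 0 : ℝ) : ℂ)) univ := by
    simp only [max_zero_eq_charFun_of_charFun_withDensity hp hchar hgm hg0 hgint]
    exact fun x _ ↦ (analyticOnNhd_charFun hmoments _ (mem_univ _)).fun_comp
      (analyticAt_const.mul analyticAt_id)
  have hlocal : (fun x ↦ ((max (p x) 0 : ℝ) : ℂ)) =ᶠ[𝓝 x₀] 0 := by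
    filter_upwards [hp.continuousAt.eventually_lt_const hx₀] with x hx
    simp [max_eq_right hx.le]
  have hzero (x : ℝ) : p x ≤ 0 := by
    have := hanalytic.eqOn_zero_of_preconnected_of_eventuallyEq_zero isPreconnected_univ
      (mem_univ x₀) hlocal (mem_univ x)
    simpa using this
  refine IsProbabilityMeasure.ne_zero (volume.withDensity fun x ↦ ENNReal.ofReal (p x)) ?_
  simp [ENNReal.ofReal_of_nonpos (hzero _)]

end CharFun

section ExpTaylor

variable {α : Type*} {mα : MeasurableSpace α} {μ : Measure α} {X : α → ℝ}

lemma abs_one_sub_exp_neg_sub_le {y : ℝ} (hy : 0 ≤ y) : |1 - Real.exp (-y) - y| ≤ y ^ 2 / 2 := by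
  have hlower := Real.one_sub_le_exp_neg y
  have hupper : Real.exp (-y) ≤ 1 - y + y ^ 2 / 2 := by
    rw [Real.exp_neg]
    refine inv_le_of_inv_le₀ (by nlinarith [sq_nonneg (y - 1)]) ?_
    calc (1 - y + y ^ 2 / 2)⁻¹ ≤ 1 + y + y ^ 2 / 2 := by
          rw [inv_le_iff_one_le_mul₀ (by nlinarith [sq_nonneg (y - 1)])]
          nlinarith [sq_nonneg (y ^ 2)]
      _ ≤ Real.exp y := Real.quadratic_le_exp_of_nonneg hy
  rw [abs_le]
  constructor <;> linarith

lemma tendsto_one_sub_exp_neg_sub_div_sq (y : ℝ) :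
    Tendsto (fun θ ↦ (1 - Real.exp (-(θ * y)) - θ * y) / θ ^ 2) (𝓝[≠] 0) (𝓝 (-(y ^ 2 / 2))) := by
  have hlin : Tendsto (fun θ ↦ -(θ * y)) (𝓝[≠] 0) (𝓝 0) :=
    tendsto_nhdsWithin_of_tendsto_nhds (Continuous.tendsto' (by fun_prop) _ _ (by simp))
  have hexp := (Real.exp_sub_sum_range_succ_isLittleO_pow 2).comp_tendsto hlin
  have hpow : (fun θ ↦ (-(θ * y)) ^ 2) =O[𝓝[≠] 0] fun θ ↦ θ ^ 2 := by
    simpa [mul_pow, mul_comm] using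
      (isBigO_refl (fun θ : ℝ ↦ θ ^ 2) (𝓝[≠] 0)).const_mul_left (y ^ 2)
  have hlim := (hexp.trans_isBigO hpow).tendsto_div_nhds_zero.const_sub (-(y ^ 2 / 2))
  rw [sub_zero] at hlim
  refine hlim.congr' ?_
  filter_upwards [self_mem_nhdsWithin] with θ (hθ : θ ≠ 0)
  simp only [Function.comp_apply, Finset.sum_range_succ, Finset.sum_range_zero, Nat.factorial]
  field_simp
  push_cast
  ring

lemma tendsto_integral_one_sub_exp_neg_sub_div_sq (hX : 0 ≤ᵐ[μ] X) (hX2 : MemLp X 2 μ) :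
    Tendsto (fun θ ↦ ∫ x, (1 - Real.exp (-(θ * X x)) - θ * X x) / θ ^ 2 ∂μ) (𝓝[>] 0)
      (𝓝 (-((∫ x, X x ^ 2 ∂μ) / 2))) := by
  have hXm := hX2.aestronglyMeasurable.aemeasurable
  rw [← integral_div, ← integral_neg]
  refine tendsto_integral_filter_of_dominated_convergence (fun x ↦ X x ^ 2 / 2)
    (.of_forall fun θ ↦ AEMeasurable.aestronglyMeasurable (by fun_prop)) ?_
    (hX2.integrable_sq.div_const 2)
    (.of_forall fun x ↦
      (tendsto_one_sub_exp_neg_sub_div_sq (X x)).mono_left (nhdsGT_le_nhdsNE 0))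
  filter_upwards [self_mem_nhdsWithin] with θ (hθ : 0 < θ)
  filter_upwards [hX] with x hx
  have hx' : 0 ≤ X x := hx
  rw [norm_div, Real.norm_eq_abs, Real.norm_of_nonneg (sq_nonneg θ), div_le_iff₀ (by positivity)]
  exact (abs_one_sub_exp_neg_sub_le (by positivity)).trans_eq (by ring)

end ExpTaylor

section WithDensity

variable {α : Type*} {mα : MeasurableSpace α} {μ : Measure α} {p f : α → ℝ}

lemma integrable_mul_of_integrable_withDensity_ofReal (hp : Measurable p) (hp0 : ∀ x, 0 ≤ p x)
    (hf : Integrable f (μ.withDensity fun x ↦ ENNReal.ofReal (p x))) :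
    Integrable (fun x ↦ f x * p x) μ := by
  have := (integrable_withDensity_iff_integrable_smul' (by fun_prop)
    (.of_forall fun _ ↦ ENNReal.ofReal_lt_top)).1 hf
  simpa [ENNReal.toReal_ofReal, hp0, mul_comm] using this

lemma setIntegral_withDensity_ofReal (hp : Measurable p) (hp0 : ∀ x, 0 ≤ p x) {s : Set α}
    (hs : MeasurableSet s) (f : α → ℝ) :
    ∫ x in s, f x ∂μ.withDensity (fun x ↦ ENNReal.ofReal (p x)) = ∫ x in s, f x * p x ∂μ := by
  rw [setIntegral_withDensity_eq_setIntegral_toReal_smul (by fun_prop)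
    (.of_forall fun _ ↦ ENNReal.ofReal_lt_top) _ hs]
  simp only [ENNReal.toReal_ofReal, hp0, smul_eq_mul, mul_comm]

end WithDensity

section Stable

open Real

/-- The scale `c` for which the symmetric `Y`-stable law with Lévy density `C * |z| ^ (-Y - 1)` has
characteristic function `exp (-(c * |u| ^ Y))`. -/
noncomputable def stableScale (Y C : ℝ) : ℝ := -2 * C * Gamma (-Y) * cos (π * Y / 2)

/-- `μ` is the symmetric stable law of index `Y` and scale `c`, as specified by its characteristic
function. -/
def IsSymmStable (μ : Measure ℝ) (Y c : ℝ) : Prop :=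
  ∀ u, charFun μ u = (exp (-(c * |u| ^ Y)) : ℝ)

lemma stableScale_pos {Y C : ℝ} (h0 : 0 < Y) (h2 : Y < 2) (hcos : cos (π * Y / 2) ≠ 0)
    (hC : 0 < C) : 0 < stableScale Y C := by
  have hGamma : Gamma (-(Y / 2)) < 0 := by
    have hrec := Gamma_add_one (s := -(Y / 2)) (by linarith)
    have hpos : 0 < Gamma (-(Y / 2) + 1) := Gamma_pos_of_pos (by linarith)
    nlinarith
  have hprod : Gamma (-Y) * cos (π * Y / 2) < 0 := by
    have hnorm := sqrt_pi_mul_Gamma_neg_half hcos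
    have hfac : 0 < 2 * 2 ^ Y * Gamma ((Y + 1) / 2) :=
      mul_pos (by positivity) (Gamma_pos_of_pos (by linarith))
    have hneg : √π * Gamma (-(Y / 2)) < 0 := mul_neg_of_pos_of_neg (by positivity) hGamma
    refine neg_of_mul_neg_right (a := 2 * 2 ^ Y * Gamma ((Y + 1) / 2)) ?_ hfac.le
    linarith
  rw [stableScale]
  nlinarith

lemma levyIntegral_eq_integral_gaussianReal {Y t : ℝ} (C : ℝ) (h0 : 0 < Y) (h2 : Y < 2)
    (hcos : cos (π * Y / 2) ≠ 0) (ht : 0 < t) :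
    C * ∫ z in Ioi 0, (1 - exp (-((t * z) ^ 2 / 2))) * z ^ (-Y - 1) =
      (∫ w, stableScale Y C * t ^ Y * |w| ^ Y ∂gaussianReal 0 1) / 2 := by
  have hpow : (t ^ 2 / 2) ^ (Y / 2) * 2 ^ Y = t ^ Y * 2 ^ (Y / 2) := by
    rw [div_rpow (by positivity) two_pos.le, ← rpow_natCast_mul ht.le,
      show ((2 : ℕ) : ℝ) * (Y / 2) = Y by push_cast; ring, div_mul_eq_mul_div, mul_div_assoc,
      ← rpow_sub two_pos, sub_half]
  have hlevy := integral_one_sub_exp_neg_mul_sq_mul_rpow h0 h2 (a := t ^ 2 / 2) (by positivity)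
  simp only [← mul_div_right_comm, ← mul_pow] at hlevy
  rw [hlevy, integral_const_mul, integral_abs_rpow_gaussianReal one_ne_zero (by linarith),
    NNReal.coe_one, mul_one, stableScale]
  have hnorm := sqrt_pi_mul_Gamma_neg_half hcos
  generalize cos (π * Y / 2) = κ at hnorm ⊢
  field_simp
  linear_combination (-(C * (t ^ 2 / 2) ^ (Y / 2))) * hnorm -
    (2 * C * Gamma (-Y) * κ * Gamma ((Y + 1) / 2)) * hpow

lemma integrableOn_levyIntegrand {Y t : ℝ} (h0 : 0 < Y) (h2 : Y < 2) (ht : 0 < t) :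
    IntegrableOn (fun z ↦ (1 - exp (-((t * z) ^ 2 / 2))) * z ^ (-Y - 1)) (Ioi 0) := by
  simpa only [mul_pow, mul_div_right_comm] using
    integrableOn_one_sub_exp_neg_mul_sq_mul_rpow h0 h2 (a := t ^ 2 / 2) (by positivity)

lemma exp_neg_mul_rpow_le {Y c x : ℝ} (hY : 1 ≤ Y) (hc : 0 ≤ c) (hx : 0 ≤ x) :
    exp (-(c * x ^ Y)) ≤ exp (c * (Y - 1)) * exp (-(c * Y * x)) := by
  have hbernoulli := one_add_mul_self_le_rpow_one_add (s := x - 1) (by linarith) hY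
  rw [add_sub_cancel] at hbernoulli
  rw [← exp_add, exp_le_exp]
  nlinarith

lemma integrable_exp_neg_of_nonneg {α : Type*} {mα : MeasurableSpace α} {μ : Measure α}
    [IsFiniteMeasure μ] {f : α → ℝ} (hf : AEMeasurable f μ) (hf0 : ∀ x, 0 ≤ f x) :
    Integrable (fun x ↦ exp (-f x)) μ :=
  .of_bound (AEMeasurable.aestronglyMeasurable (by fun_prop)) 1
    (.of_forall fun x ↦ by simpa using hf0 x)

lemma integrableOn_one_sub_exp_neg_sq_mul_sub {μ : Measure ℝ} [IsFiniteMeasure μ] {Y t : ℝ}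
    {p : ℝ → ℝ} (hdens : μ = volume.withDensity fun x ↦ ENNReal.ofReal (p x))
    (hp : Measurable p) (hp0 : ∀ x, 0 ≤ p x) (C : ℝ) (h0 : 0 < Y) (h2 : Y < 2) (ht : 0 < t) :
    IntegrableOn (fun z ↦ (1 - exp (-((t * z) ^ 2 / 2))) * (p z - C * z ^ (-Y - 1))) (Ioi 0) := by
  have hμ : Integrable (fun z ↦ 1 - exp (-((t * z) ^ 2 / 2))) μ :=
    (integrable_const 1).sub (integrable_exp_neg_of_nonneg (by fun_prop) fun x ↦ by positivity)
  rw [hdens] at hμ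
  have hdensity := integrable_mul_of_integrable_withDensity_ofReal hp hp0 hμ
  have hlevy := integrableOn_levyIntegrand h0 h2 ht
  refine (hdensity.integrableOn.sub (hlevy.const_mul C)).congr_fun (fun z _ ↦ ?_) measurableSet_Ioi
  simp only [Pi.sub_apply]
  ring

namespace IsSymmStable

variable {μ : Measure ℝ} {Y c t : ℝ} {p : ℝ → ℝ}

lemma isNegInvariant [IsFiniteMeasure μ] (h : IsSymmStable μ Y c) : μ.IsNegInvariant :=
  isNegInvariant_of_charFun_neg fun u ↦ by rw [h, h, abs_neg]

lemma density_nonneg [IsProbabilityMeasure μ] (h : IsSymmStable μ Y c) (hY : 1 ≤ Y) (hc : 0 < c)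
    (hp : Continuous p) (hdens : μ = volume.withDensity fun x ↦ ENNReal.ofReal (p x)) (x : ℝ) :
    0 ≤ p x := by
  subst hdens
  exact nonneg_of_charFun_withDensity_le_exp hp h (by fun_prop) (fun _ ↦ (exp_pos _).le)
    (b := c * Y) (by positivity) (fun u ↦ exp_neg_mul_rpow_le hY hc.le (abs_nonneg u)) x

lemma integral_exp_neg_sq [IsFiniteMeasure μ] (h : IsSymmStable μ Y c) (ht : 0 ≤ t) :
    ∫ x, exp (-((t * x) ^ 2 / 2)) ∂μ = ∫ w, exp (-(c * t ^ Y * |w| ^ Y)) ∂gaussianReal 0 1 := by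
  have hswap := integral_exp_neg_mul_sq_eq_integral_charFun μ t
  simp only [h _, integral_complex_ofReal, abs_mul, abs_of_nonneg ht,
    mul_rpow ht (abs_nonneg _), ← mul_assoc] at hswap
  exact_mod_cast hswap

lemma setIntegral_Ioi_one_sub_exp_neg_sq [IsProbabilityMeasure μ] (h : IsSymmStable μ Y c)
    (hc : 0 ≤ c) (ht : 0 ≤ t) :
    ∫ x in Ioi 0, (1 - exp (-((t * x) ^ 2 / 2))) ∂μ =
      (∫ w, (1 - exp (-(c * t ^ Y * |w| ^ Y))) ∂gaussianReal 0 1) / 2 := by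
  have := h.isNegInvariant
  have hμ : Integrable (fun x ↦ exp (-((t * x) ^ 2 / 2))) μ :=
    integrable_exp_neg_of_nonneg (by fun_prop) fun x ↦ by positivity
  have hN : Integrable (fun w ↦ exp (-(c * t ^ Y * |w| ^ Y))) (gaussianReal 0 1) :=
    integrable_exp_neg_of_nonneg (by fun_prop) fun x ↦ by positivity
  have hhalf := setIntegral_Ioi_zero_of_even (μ := μ) (f := fun x ↦ 1 - exp (-((t * x) ^ 2 / 2)))
    ((integrable_const 1).sub hμ) (fun x ↦ by simp) (by simp)
  rw [hhalf, integral_sub (integrable_const 1) hμ, integral_sub (integrable_const 1) hN,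
    h.integral_exp_neg_sq ht]
  simp

variable {C : ℝ}

lemma integral_one_sub_exp_neg_sq_mul_sub [IsProbabilityMeasure μ]
    (h : IsSymmStable μ Y (stableScale Y C))
    (hdens : μ = volume.withDensity fun x ↦ ENNReal.ofReal (p x)) (hp : Measurable p)
    (hp0 : ∀ x, 0 ≤ p x) (h0 : 0 < Y) (h2 : Y < 2) (hcos : cos (π * Y / 2) ≠ 0) (hC : 0 < C)
    (ht : 0 < t) :
    ∫ z in Ioi 0, (1 - exp (-((t * z) ^ 2 / 2))) * (p z - C * z ^ (-Y - 1)) =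
      (∫ w, (1 - exp (-(stableScale Y C * t ^ Y * |w| ^ Y)) - stableScale Y C * t ^ Y * |w| ^ Y)
        ∂gaussianReal 0 1) / 2 := by
  have hc := stableScale_pos h0 h2 hcos hC
  have hdensity := integrableOn_one_sub_exp_neg_sq_mul_sub hdens hp hp0 0 h0 h2 ht
  have hlevy := (integrableOn_levyIntegrand h0 h2 ht).const_mul C
  have hone : Integrable (fun w ↦ 1 - exp (-(stableScale Y C * t ^ Y * |w| ^ Y)))
      (gaussianReal 0 1) :=
    (integrable_const 1).sub (integrable_exp_neg_of_nonneg (by fun_prop) fun x ↦ by positivity)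
  have hpow := (integrable_abs_rpow_gaussianReal 1 h0.le).const_mul (stableScale Y C * t ^ Y)
  simp only [zero_mul, sub_zero] at hdensity
  calc ∫ z in Ioi 0, (1 - exp (-((t * z) ^ 2 / 2))) * (p z - C * z ^ (-Y - 1))
      = (∫ z in Ioi 0, (1 - exp (-((t * z) ^ 2 / 2))) * p z) -
          C * ∫ z in Ioi 0, (1 - exp (-((t * z) ^ 2 / 2))) * z ^ (-Y - 1) := by
        rw [← integral_const_mul, ← integral_sub hdensity hlevy]
        congr! 2 with z
        ring
    _ = (∫ w, (1 - exp (-(stableScale Y C * t ^ Y * |w| ^ Y))) ∂gaussianReal 0 1) / 2 -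
          (∫ w, stableScale Y C * t ^ Y * |w| ^ Y ∂gaussianReal 0 1) / 2 := by
        rw [levyIntegral_eq_integral_gaussianReal C h0 h2 hcos ht,
          ← h.setIntegral_Ioi_one_sub_exp_neg_sq hc.le ht.le, hdens,
          setIntegral_withDensity_ofReal hp hp0 measurableSet_Ioi]
    _ = _ := by
        rw [integral_sub hone hpow, sub_div]

lemma tendsto_rpow_mul_integral [IsProbabilityMeasure μ] (h : IsSymmStable μ Y (stableScale Y C))
    (hdens : μ = volume.withDensity fun x ↦ ENNReal.ofReal (p x)) (hp : Measurable p)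
    (hp0 : ∀ x, 0 ≤ p x) (h0 : 0 < Y) (h2 : Y < 2) (hcos : cos (π * Y / 2) ≠ 0) (hC : 0 < C) :
    Tendsto (fun t ↦ t ^ (-(2 * Y)) *
        ∫ z in Ioi 0, (1 - exp (-((t * z) ^ 2 / 2))) * (p z - C * z ^ (-Y - 1))) (𝓝[>] 0)
      (𝓝 (-(stableScale Y C ^ 2 / 4 * ∫ w, |w| ^ (2 * Y) ∂gaussianReal 0 1))) := by
  have hc := stableScale_pos h0 h2 hcos hC
  have hsq (w : ℝ) : (|w| ^ Y) ^ 2 = |w| ^ (2 * Y) := by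
    rw [← rpow_mul_natCast (abs_nonneg w), mul_comm, Nat.cast_ofNat]
  have hL2 : MemLp (fun w ↦ |w| ^ Y) 2 (gaussianReal 0 1) := by
    refine (memLp_two_iff_integrable_sq (by fun_prop (disch := positivity))).2 ?_
    simpa only [hsq] using integrable_abs_rpow_gaussianReal 1 (r := 2 * Y) (by positivity)
  have hθ : Tendsto (fun t ↦ stableScale Y C * t ^ Y) (𝓝[>] 0) (𝓝[>] 0) := by
    refine tendsto_nhdsWithin_iff.2 ⟨?_, ?_⟩
    · have hcont : ContinuousAt (fun t ↦ stableScale Y C * t ^ Y) 0 :=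
        (continuousAt_rpow_const 0 Y (.inr h0.le)).const_mul _
      simpa [zero_rpow h0.ne'] using hcont.tendsto.mono_left nhdsWithin_le_nhds
    · filter_upwards [self_mem_nhdsWithin] with t (ht : 0 < t)
      exact mem_Ioi.2 (by positivity)
  have hlim := ((tendsto_integral_one_sub_exp_neg_sub_div_sq (.of_forall fun w ↦ by positivity)
    hL2).comp hθ).const_mul (stableScale Y C ^ 2 / 2)
  simp only [hsq] at hlim
  convert! hlim.congr' ?_ using 2
  · ring
  · filter_upwards [self_mem_nhdsWithin] with t (ht : 0 < t)
    rw [h.integral_one_sub_exp_neg_sq_mul_sub hdens hp hp0 h0 h2 hcos hC ht, Function.comp_apply,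
      integral_div, mul_pow, ← rpow_mul_natCast ht.le, Nat.cast_ofNat, mul_comm Y, rpow_neg ht.le]
    field_simp

end IsSymmStable

end Stable

section Smoothing

lemma tendsto_rpow_mul_comp_div {I : ℝ → ℝ} {a L σ : ℝ} (hσ : 0 < σ)
    (h : Tendsto (fun t ↦ t ^ a * I t) (𝓝[>] 0) (𝓝 L)) :
    Tendsto (fun s ↦ s ^ a * I (s / σ)) (𝓝[>] 0) (𝓝 (σ ^ a * L)) := by
  have hdiv : Tendsto (fun s ↦ s / σ) (𝓝[>] 0) (𝓝[>] 0) := by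
    refine tendsto_nhdsWithin_iff.2 ⟨?_, ?_⟩
    · exact tendsto_nhdsWithin_of_tendsto_nhds (Continuous.tendsto' (by fun_prop) _ _ (by simp))
    · filter_upwards [self_mem_nhdsWithin] with s hs using div_pos hs hσ
  refine ((h.comp hdiv).const_mul (σ ^ a)).congr' ?_
  filter_upwards [self_mem_nhdsWithin] with s (hs : 0 < s)
  rw [Function.comp_apply, Real.div_rpow hs.le hσ.le]
  field_simp

variable {Ω : Type*} {mΩ : MeasurableSpace Ω} {P : Measure Ω} {W : Ω → ℝ}

lemma integral_abs_rpow_two_mul_of_hasLaw_gaussianReal (hW : HasLaw W (gaussianReal 0 1) P) {r : ℝ}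
    (hr : 1 / 2 < r) :
    ∫ x, |x| ^ (2 * r) ∂gaussianReal 0 1 = (2 * r - 1) * ∫ ω, |W ω| ^ (2 * r - 2) ∂P := by
  have hmoment := integral_abs_rpow_add_two_gaussianReal one_ne_zero (r := 2 * r - 2) (by linarith)
  rw [show 2 * r - 2 + 2 = 2 * r by ring, NNReal.coe_one, mul_one] at hmoment
  rw [hmoment, ← hW.integral_comp (Measurable.aestronglyMeasurable (by fun_prop))]
  simp only [Function.comp_apply]
  ring

lemma integral_indicator_mul_of_hasLaw_gaussianReal (hW : HasLaw W (gaussianReal 0 1) P)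
    {σ b : ℝ} (hσ : 0 < σ) (hb : 0 ≤ b) :
    ∫ ω, {ω | 0 ≤ σ * W ω ∧ σ * W ω ≤ b}.indicator (fun ω ↦ σ * W ω) ω ∂P =
      σ / √(2 * Real.pi) * (1 - Real.exp (-((b / σ) ^ 2 / 2))) := by
  rw [← integral_indicator_mul_gaussianReal_zero_one hσ hb, ← hW.integral_comp]
  · rfl
  · have hset : MeasurableSet {x : ℝ | 0 ≤ σ * x ∧ σ * x ≤ b} := by measurability
    exact (Measurable.indicator (by fun_prop) hset).aestronglyMeasurable

lemma isSymmStable_of_integral_exp {μ : Measure ℝ} {Y c : ℝ}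
    (h : ∀ u : ℝ, (∫ x, Complex.exp (Complex.I * u * x) ∂μ) = (Real.exp (-(c * |u| ^ Y)) : ℂ)) :
    IsSymmStable μ Y c := fun u ↦ by
  rw [← h, charFun_apply_real]
  congr! 3 with x
  ring

lemma smoothing_constant_eq {Y C σ m : ℝ} (hσ : 0 < σ) :
    σ / √(2 * Real.pi) * (σ ^ (-(2 * Y)) * -(stableScale Y C ^ 2 / 4 * ((2 * Y - 1) * m))) =
      -((2 * Y - 1) * C ^ 2 * Real.cos (Real.pi * Y / 2) ^ 2 * Real.Gamma (-Y) ^ 2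
        / (√(2 * Real.pi) * σ ^ (2 * Y - 1))) * m := by
  rw [stableScale, Real.rpow_neg hσ.le, Real.rpow_sub_one hσ.ne']
  field_simp
  ring

end Smoothing

/-- Gaussian-smoothed second-order stable density correction, first-moment version
(limit of `B₂₂⁽³⁾` in the proof of Theorem 3.3). -/
theorem stmt12
    {Ω : Type} [MeasurableSpace Ω] (P : Measure Ω) [IsProbabilityMeasure P]
    (Y C σ c : ℝ) (hY : Y ∈ Set.Ioo (1:ℝ) 2) (hC : 0 < C) (hσ : 0 < σ)
    (hc : c = -2 * C * Real.Gamma (-Y) * Real.cos (Real.pi * Y / 2))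
    (μ : Measure ℝ) [IsProbabilityMeasure μ]
    (hchar : ∀ u : ℝ, (∫ x, Complex.exp (Complex.I * u * x) ∂μ)
      = (Real.exp (-(c * |u| ^ Y)) : ℂ))
    (p : ℝ → ℝ) (hp : Continuous p)
    (hdens : μ = MeasureTheory.volume.withDensity (fun x => ENNReal.ofReal (p x)))
    (W : Ω → ℝ) (hWmeas : Measurable W)
    (hWlaw : Measure.map W P = gaussianReal 0 1)
    (m : ℝ) (hm : m = ∫ ω, |W ω| ^ (2*Y - 2) ∂P) :
    (∀ s > (0:ℝ), IntegrableOn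
        (fun z => (∫ ω, Set.indicator {ω | 0 ≤ σ * W ω ∧ σ * W ω ≤ s * z}
            (fun ω => σ * W ω) ω ∂P) * (p z - C * z ^ (-Y - 1)))
        (Set.Ioi 0)) ∧
    Filter.Tendsto
      (fun s => s ^ (-(2*Y)) * ∫ z in Set.Ioi (0:ℝ),
        (∫ ω, Set.indicator {ω | 0 ≤ σ * W ω ∧ σ * W ω ≤ s * z}
            (fun ω => σ * W ω) ω ∂P) * (p z - C * z ^ (-Y - 1)))
      (𝓝[>] (0:ℝ))
      (𝓝 (-((2*Y - 1) * C ^ 2 * Real.cos (Real.pi * Y / 2) ^ 2 * Real.Gamma (-Y) ^ 2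
        / (Real.sqrt (2 * Real.pi) * σ ^ (2*Y - 1))) * m)) := by
  have hcos : Real.cos (Real.pi * Y / 2) ≠ 0 := (Real.cos_neg_of_pi_div_two_lt_of_lt
    (by nlinarith [Real.pi_pos, hY.1]) (by nlinarith [Real.pi_pos, hY.2])).ne
  have h0 : 0 < Y := zero_lt_one.trans hY.1
  have hW : HasLaw W (gaussianReal 0 1) P := ⟨hWmeas.aemeasurable, hWlaw⟩
  obtain rfl : c = stableScale Y C := hc
  have hμ : IsSymmStable μ Y (stableScale Y C) := isSymmStable_of_integral_exp hchar
  have hp0 := hμ.density_nonneg hY.1.le (stableScale_pos h0 hY.2 hcos hC) hp hdens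
  have htrunc {s : ℝ} (hs : 0 < s) : EqOn
      (fun z ↦ σ / √(2 * Real.pi) *
        ((1 - Real.exp (-((s / σ * z) ^ 2 / 2))) * (p z - C * z ^ (-Y - 1))))
      (fun z ↦ (∫ ω, {ω | 0 ≤ σ * W ω ∧ σ * W ω ≤ s * z}.indicator (fun ω ↦ σ * W ω) ω ∂P) *
        (p z - C * z ^ (-Y - 1))) (Ioi 0) := fun z hz ↦ by
    simp only [integral_indicator_mul_of_hasLaw_gaussianReal hW hσ (mul_pos hs hz).le,
      mul_div_right_comm s, mul_assoc]
  refine ⟨fun s hs ↦ IntegrableOn.congr_fun ((integrableOn_one_sub_exp_neg_sq_mul_sub hdens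
    hp.measurable hp0 C h0 hY.2 (div_pos hs hσ)).const_mul _) (htrunc hs) measurableSet_Ioi, ?_⟩
  have hlim := (tendsto_rpow_mul_comp_div hσ (hμ.tendsto_rpow_mul_integral hdens hp.measurable hp0
    h0 hY.2 hcos hC)).const_mul (σ / √(2 * Real.pi))
  rw [integral_abs_rpow_two_mul_of_hasLaw_gaussianReal hW (by linarith [hY.1]), ← hm,
    smoothing_constant_eq hσ] at hlim
  refine hlim.congr' ?_
  filter_upwards [self_mem_nhdsWithin] with s hs
  rw [← setIntegral_congr_fun measurableSet_Ioi (htrunc hs), integral_const_mul, mul_left_comm]
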